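/- Suppose a group G acts geometrically on a CAT(0) space X with fixed basepoint x₀ and |∂X| > 2. If there exists a reflection r ∈ G of X whose centralizer Z_r = { h ∈ G : rh = hr } is finite, then the boundary ∂X is a scrambled set. -/

import Mathlib

/-!
Let `α ≠ β` be boundary points; write `ξ`, `η` for the rays from `x₀` towards them.

*The limit superior is positive*, without using the reflection. Comparing with far points `η T`
(a finite version of the Busemann function of `η`), convexity of the metric shows that the ray from
`ξ t` towards `β` and the remainder of `ξ` diverge at a linear rate that does not depend on `t`
once `t` is large (`CAT0.uniform_divergence`). Choosing group elements that carry `ξ n` back to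
within bounded distance of `x₀` gives infinitely many translates of the pair `(α, β)` that are
uniformly separated (`CAT0.exists_separating`).

*The limit inferior is zero.* The centralizer of `r` acts coboundedly on the fixed-point set `F` of
`r`; as it is finite, `F` is bounded (`bounded_fixed`). If every translate of `F` met `ξ` or `η`,
then by cocompactness the whole space would be within bounded distance of the union of these two
rays, so every boundary point would be `α` or `β` (`CAT0.no_third_point`). Hence some `k` moves both
rays off `F`. Both translated rays then stay on the side of `F` containing `k x₀`. Reflecting a
distant point of one of them gives a point `y` far away on the other side, and the rays from `y`
towards `kα` and `kβ` must both cross the bounded set `F` (`CAT0.crossing`), hence are close to each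
other up to a large time. Carrying such points `y` back to near `x₀` gives translates of `(α, β)`
whose distance tends to zero (`CAT0.exists_contracting`).
-/

/-- `γ` parametrizes a geodesic segment from `x` to `y` by arc length:
it is an isometric embedding of `[0, dist x y]` with `γ 0 = x` and `γ (dist x y) = y`. -/
def IsGeodesicFrom {X : Type*} [MetricSpace X] (γ : ℝ → X) (x y : X) : Prop :=
  γ 0 = x ∧ γ (dist x y) = y ∧
    ∀ s ∈ Set.Icc (0 : ℝ) (dist x y), ∀ t ∈ Set.Icc (0 : ℝ) (dist x y),
      dist (γ s) (γ t) = |s - t|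

/-- A geodesic space: every pair of points is joined by a geodesic. -/
def GeodesicSpace (X : Type*) [MetricSpace X] : Prop :=
  ∀ x y : X, ∃ γ : ℝ → X, IsGeodesicFrom γ x y

/-- The comparison point in the Euclidean plane: the point at arc-length parameter `s`
on the segment from `p` to `q`, where `D` is the length of that segment. -/
noncomputable def cmpPt (p q : EuclideanSpace ℝ (Fin 2)) (D s : ℝ) :
    EuclideanSpace ℝ (Fin 2) :=
  p + (s / D) • (q - p)

/-- A CAT(0) space: a geodesic space in which every geodesic triangle satisfies the
CAT(0) comparison inequality with respect to a comparison triangle in the Euclidean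
plane `ℝ²` with the same side lengths. -/
def CAT0 (X : Type*) [MetricSpace X] : Prop :=
  GeodesicSpace X ∧
    ∀ (p q r : X) (γ γ' : ℝ → X), IsGeodesicFrom γ p q → IsGeodesicFrom γ' p r →
      ∀ pc qc rc : EuclideanSpace ℝ (Fin 2),
        dist pc qc = dist p q → dist pc rc = dist p r → dist qc rc = dist q r →
        ∀ s ∈ Set.Icc (0 : ℝ) (dist p q), ∀ t ∈ Set.Icc (0 : ℝ) (dist p r),
          dist (γ s) (γ' t) ≤ dist (cmpPt pc qc (dist p q) s) (cmpPt pc rc (dist p r) t)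

/-- A geodesic ray: an isometric embedding of `[0, ∞)`. -/
def IsGeodesicRay {X : Type*} [MetricSpace X] (ξ : ℝ → X) : Prop :=
  ∀ s ∈ Set.Ici (0 : ℝ), ∀ t ∈ Set.Ici (0 : ℝ), dist (ξ s) (ξ t) = |s - t|

/-- Two rays are asymptotic if they are at bounded distance from each other. -/
def Asymptotic {X : Type*} [MetricSpace X] (ξ ζ : ℝ → X) : Prop :=
  ∃ C : ℝ, ∀ t ≥ (0 : ℝ), dist (ξ t) (ζ t) ≤ C

/-- The action of `G` on `X` is by isometries. -/
def IsometricAction (G X : Type*) [Group G] [MetricSpace X] [MulAction G X] : Prop :=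
  ∀ (g : G) (x y : X), dist (g • x) (g • y) = dist x y

/-- The action of `G` on `X` is (metrically) proper. -/
def ProperAction (G X : Type*) [Group G] [MetricSpace X] [MulAction G X] : Prop :=
  ∀ (x : X) (R : ℝ), {g : G | dist x (g • x) ≤ R}.Finite

/-- The action of `G` on `X` is cocompact: some (hence any) orbit is coarsely dense. -/
def CocompactAction (G X : Type*) [Group G] [MetricSpace X] [MulAction G X] : Prop :=
  ∀ x : X, ∃ R > (0 : ℝ), ∀ y : X, ∃ g : G, dist y (g • x) ≤ R

/-- A geometric action: proper and cocompact, by isometries. -/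
def GeometricAction (G X : Type*) [Group G] [MetricSpace X] [MulAction G X] : Prop :=
  IsometricAction G X ∧ ProperAction G X ∧ CocompactAction G X

/-- A bundled presentation of the boundary `∂X` of a proper CAT(0) space `X`,
together with the induced action of `G`.  The type `Bd` plays the role of `∂X`:
`ray x α` is the unique geodesic ray issuing from `x` in the asymptotic class `α`,
every geodesic ray is asymptotic to exactly one such ray, and the `G`-action on `Bd`
is the one induced by the action on rays, `g • [ξ] = [g ∘ ξ]`. -/
structure BoundaryStruct (G X Bd : Type*) [Group G] [MetricSpace X]
    [MulAction G X] [MulAction G Bd] where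
  ray : X → Bd → ℝ → X
  isRay : ∀ (x : X) (α : Bd), IsGeodesicRay (ray x α)
  ray_start : ∀ (x : X) (α : Bd), ray x α 0 = x
  ray_asymp : ∀ (x y : X) (α : Bd), Asymptotic (ray x α) (ray y α)
  ray_inj : ∀ (x : X) (α β : Bd), Asymptotic (ray x α) (ray x β) → α = β
  ray_surj : ∀ ξ : ℝ → X, IsGeodesicRay ξ → ∃ α : Bd, Asymptotic ξ (ray (ξ 0) α)
  equivariant : ∀ (g : G) (x : X) (α : Bd) (t : ℝ), g • ray x α t = ray (g • x) (g • α) t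

/-- The metric `d_{∂X}` on the boundary with respect to the basepoint `x₀`:
`d_{∂X}(α,β) = Σ_{i=1}^∞ min { d(ξ_{x₀,α}(i), ξ_{x₀,β}(i)), 2⁻ⁱ }`. -/
noncomputable def bdist {G X Bd : Type*} [Group G] [MetricSpace X]
    [MulAction G X] [MulAction G Bd] (B : BoundaryStruct G X Bd) (x₀ : X)
    (α β : Bd) : ℝ :=
  ∑' i : ℕ, min (dist (B.ray x₀ α (i + 1)) (B.ray x₀ β (i + 1))) ((1 : ℝ) / 2 ^ (i + 1))

/-- The boundary is a scrambled set: for all distinct `α, β ∈ ∂X`,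
`limsup { d_{∂X}(gα, gβ) : g ∈ G } > 0` and `liminf { d_{∂X}(gα, gβ) : g ∈ G } = 0`
(limit superior/inferior being taken along the cofinite filter on `G`). -/
def IsScrambled {G X Bd : Type*} [Group G] [MetricSpace X]
    [MulAction G X] [MulAction G Bd] (B : BoundaryStruct G X Bd) (x₀ : X) : Prop :=
  ∀ α β : Bd, α ≠ β →
    0 < Filter.limsup (fun g : G => bdist B x₀ (g • α) (g • β)) Filter.cofinite ∧
    Filter.liminf (fun g : G => bdist B x₀ (g • α) (g • β)) Filter.cofinite = 0

/-- The boundary has more than two points. -/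
def MoreThanTwo (Bd : Type*) : Prop :=
  ∃ a b c : Bd, a ≠ b ∧ a ≠ c ∧ b ≠ c

/-- A subset of a geodesic space is (geodesically) convex if every geodesic between two
of its points stays in it. -/
def GeodConvex {X : Type*} [MetricSpace X] (A : Set X) : Prop :=
  ∀ x ∈ A, ∀ y ∈ A, ∀ γ : ℝ → X, IsGeodesicFrom γ x y →
    ∀ t ∈ Set.Icc (0 : ℝ) (dist x y), γ t ∈ A

/-- An element `r` of a group acting by isometries on a geodesic space `X` acts as a
*reflection* of `X` if `r²` acts as the identity, the complement of the fixed-point set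
`F_r` has exactly two connected components, both convex, and `r` interchanges them. -/
def ActsAsReflection (G : Type*) {X : Type*} [Group G] [MetricSpace X] [MulAction G X]
    (r : G) : Prop :=
  (∀ x : X, r • r • x = x) ∧
  ∃ a b : X,
    a ∈ ({x : X | r • x = x}ᶜ) ∧ b ∈ ({x : X | r • x = x}ᶜ) ∧
    connectedComponentIn ({x : X | r • x = x}ᶜ) a ≠
      connectedComponentIn ({x : X | r • x = x}ᶜ) b ∧
    connectedComponentIn ({x : X | r • x = x}ᶜ) a ∪
        connectedComponentIn ({x : X | r • x = x}ᶜ) b = ({x : X | r • x = x}ᶜ) ∧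
    GeodConvex (connectedComponentIn ({x : X | r • x = x}ᶜ) a) ∧
    GeodConvex (connectedComponentIn ({x : X | r • x = x}ᶜ) b) ∧
    (fun y => r • y) '' connectedComponentIn ({x : X | r • x = x}ᶜ) a =
      connectedComponentIn ({x : X | r • x = x}ᶜ) b

/-! ### Convexity of the metric -/

lemma exists_comparison (a b c : ℝ) (ha : 0 ≤ a) (hb : 0 ≤ b) (hc : 0 ≤ c)
    (h1 : a ≤ b + c) (h2 : b ≤ a + c) (h3 : c ≤ a + b) :
    ∃ p q r : EuclideanSpace ℝ (Fin 2), dist p q = a ∧ dist p r = b ∧ dist q r = c := by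
  rcases ha.eq_or_lt with rfl | ha
  · have : b = c := by linarith
    subst this
    refine ⟨0, 0, !₂[b, 0], ?_, ?_, ?_⟩ <;>
      simp [EuclideanSpace.dist_eq, Fin.sum_univ_two, Real.sqrt_sq_eq_abs, abs_of_nonneg hb]
  · set x := (a ^ 2 + b ^ 2 - c ^ 2) / (2 * a) with hx
    have hxa : 2 * a * x = a ^ 2 + b ^ 2 - c ^ 2 := by rw [hx]; field_simp
    have hxb : x ^ 2 ≤ b ^ 2 := by
      apply sq_le_sq'
      · rw [hx, le_div_iff₀ (by positivity)]; nlinarith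
      · rw [hx, div_le_iff₀ (by positivity)]; nlinarith
    have hy : √(b ^ 2 - x ^ 2) ^ 2 = b ^ 2 - x ^ 2 := Real.sq_sqrt (by linarith)
    refine ⟨0, !₂[a, 0], !₂[x, √(b ^ 2 - x ^ 2)], ?_, ?_, ?_⟩
    · simp [EuclideanSpace.dist_eq, Fin.sum_univ_two, Real.sqrt_sq_eq_abs, abs_of_pos ha]
    · simp only [EuclideanSpace.dist_eq, Fin.sum_univ_two, Real.dist_eq, sq_abs]
      simp only [PiLp.zero_apply, Matrix.cons_val_zero, Matrix.cons_val_one, zero_sub, neg_sq, hy]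
      rw [show x ^ 2 + (b ^ 2 - x ^ 2) = b ^ 2 by ring, Real.sqrt_sq hb]
    · simp only [EuclideanSpace.dist_eq, Fin.sum_univ_two, Real.dist_eq, sq_abs]
      simp only [Matrix.cons_val_zero, Matrix.cons_val_one, zero_sub, neg_sq, hy]
      rw [show (a - x) ^ 2 + (b ^ 2 - x ^ 2) = c ^ 2 by linarith, Real.sqrt_sq hc]

section Metric

variable {X : Type*} [MetricSpace X]

lemma exists_comparison_triangle (p q r : X) :
    ∃ pc qc rc : EuclideanSpace ℝ (Fin 2),
      dist pc qc = dist p q ∧ dist pc rc = dist p r ∧ dist qc rc = dist q r :=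
  exists_comparison _ _ _ dist_nonneg dist_nonneg dist_nonneg
    (by rw [dist_comm q r]; exact dist_triangle _ _ _) (dist_triangle _ _ _)
    (by rw [dist_comm p q]; exact dist_triangle _ _ _)

lemma IsGeodesicFrom.symm {γ : ℝ → X} {x y : X} (h : IsGeodesicFrom γ x y) :
    IsGeodesicFrom (fun u => γ (dist x y - u)) y x := by
  obtain ⟨h0, h1, h2⟩ := h
  refine ⟨by simpa using h1, by simpa [dist_comm y x] using h0, fun s hs t ht => ?_⟩
  rw [dist_comm y x] at hs ht
  rw [h2 _ ⟨by linarith [hs.2], by linarith [hs.1]⟩ _ ⟨by linarith [ht.2], by linarith [ht.1]⟩,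
    abs_sub_comm]
  congr 1; ring

lemma isGeodesicFrom_const (z : X) : IsGeodesicFrom (fun _ => z) z z := by
  refine ⟨rfl, rfl, fun s hs t ht => ?_⟩
  simp only [dist_self, Set.Icc_self, Set.mem_singleton_iff] at hs ht
  simp [hs, ht]

/-- Convexity of the metric on two geodesics with a common origin. -/
lemma CAT0.dist_le_of_common_start (h : CAT0 X) {γ γ' : ℝ → X} {p q r : X}
    (hγ : IsGeodesicFrom γ p q) (hγ' : IsGeodesicFrom γ' p r) {l : ℝ} (h0 : 0 ≤ l) (h1 : l ≤ 1) :
    dist (γ (l * dist p q)) (γ' (l * dist p r)) ≤ l * dist q r := by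
  obtain ⟨pc, qc, rc, e1, e2, e3⟩ := exists_comparison_triangle p q r
  refine (h.2 p q r γ γ' hγ hγ' pc qc rc e1 e2 e3 _
    ⟨by positivity, mul_le_of_le_one_left dist_nonneg h1⟩ _
    ⟨by positivity, mul_le_of_le_one_left dist_nonneg h1⟩).trans (le_of_eq ?_)
  have key : ∀ w : EuclideanSpace ℝ (Fin 2),
      cmpPt pc w (dist pc w) (l * dist pc w) = pc + l • (w - pc) := by
    intro w
    rcases eq_or_ne pc w with rfl | hw
    · simp [cmpPt]
    · rw [cmpPt, mul_div_assoc, div_self (dist_ne_zero.2 hw), mul_one]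
  rw [← e1, ← e2, key, key, ← e3, dist_add_left, dist_smul₀, dist_sub_right, Real.norm_eq_abs,
    abs_of_nonneg h0]

/-- Convexity of the metric on two arbitrary geodesics: the diagonal geodesic splits the
quadrilateral into two triangles. -/
lemma CAT0.dist_le (h : CAT0 X) {γ γ' : ℝ → X} {p q p' q' : X}
    (hγ : IsGeodesicFrom γ p q) (hγ' : IsGeodesicFrom γ' p' q') {l : ℝ} (h0 : 0 ≤ l)
    (h1 : l ≤ 1) :
    dist (γ (l * dist p q)) (γ' (l * dist p' q')) ≤ (1 - l) * dist p p' + l * dist q q' := by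
  obtain ⟨σ, hσ⟩ := h.1 p q'
  have a := h.dist_le_of_common_start hγ hσ h0 h1
  have b := h.dist_le_of_common_start hσ.symm hγ'.symm (l := 1 - l) (by linarith) (by linarith)
  rw [dist_comm q' p, dist_comm q' p', show dist p q' - (1 - l) * dist p q' = l * dist p q' by ring,
    show dist p' q' - (1 - l) * dist p' q' = l * dist p' q' by ring] at b
  linarith [dist_triangle (γ (l * dist p q)) (σ (l * dist p q')) (γ' (l * dist p' q'))]

/-- The Stewart form of the CAT(0) inequality, comparing a vertex with a point of the opposite
side. -/
lemma CAT0.stewart (h : CAT0 X) {γ : ℝ → X} {p r : X} (hγ : IsGeodesicFrom γ p r) (q : X)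
    {l : ℝ} (h0 : 0 ≤ l) (h1 : l ≤ 1) :
    dist q (γ (l * dist p r)) ^ 2 ≤
      (1 - l) * dist p q ^ 2 + l * dist q r ^ 2 - l * (1 - l) * dist p r ^ 2 := by
  obtain ⟨pc, qc, rc, e1, e2, e3⟩ := exists_comparison_triangle p q r
  obtain ⟨σ, hσ⟩ := h.1 p q
  have key := h.2 p q r σ γ hσ hγ pc qc rc e1 e2 e3 (dist p q)
    ⟨dist_nonneg, le_rfl⟩ (l * dist p r)
    ⟨by positivity, mul_le_of_le_one_left dist_nonneg h1⟩
  have c1 : cmpPt pc qc (dist p q) (dist p q) = qc := by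
    rw [← e1]
    rcases eq_or_ne pc qc with rfl | hw
    · simp [cmpPt]
    · rw [cmpPt, div_self (dist_ne_zero.2 hw)]; simp
  have c2 : cmpPt pc rc (dist p r) (l * dist p r) = pc + l • (rc - pc) := by
    rw [← e2]
    rcases eq_or_ne pc rc with rfl | hw
    · simp [cmpPt]
    · rw [cmpPt, mul_div_assoc, div_self (dist_ne_zero.2 hw), mul_one]
  rw [hσ.2.1, c1, c2] at key
  refine (pow_le_pow_left₀ dist_nonneg key 2).trans (le_of_eq ?_)
  rw [← e1, ← e2, ← e3]
  simp only [EuclideanSpace.dist_eq, Fin.sum_univ_two, Real.dist_eq, sq_abs]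
  rw [Real.sq_sqrt (by positivity), Real.sq_sqrt (by positivity), Real.sq_sqrt (by positivity),
    Real.sq_sqrt (by positivity)]
  simp only [PiLp.add_apply, PiLp.smul_apply, PiLp.sub_apply, smul_eq_mul]
  ring

/-! ### Geodesic rays -/

lemma IsGeodesicRay.dist_zero {ξ : ℝ → X} (h : IsGeodesicRay ξ) {t : ℝ} (ht : 0 ≤ t) :
    dist (ξ 0) (ξ t) = t := by
  rw [h 0 (Set.mem_Ici.2 le_rfl) t ht, zero_sub, abs_neg, abs_of_nonneg ht]

lemma IsGeodesicRay.shift {ξ : ℝ → X} (h : IsGeodesicRay ξ) {a : ℝ} (ha : 0 ≤ a) :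
    IsGeodesicRay (fun u => ξ (a + u)) := by
  intro s hs t ht
  rw [h _ (add_nonneg ha hs) _ (add_nonneg ha ht)]
  congr 1; ring

lemma IsGeodesicRay.segment {ξ : ℝ → X} (h : IsGeodesicRay ξ) {t : ℝ} (ht : 0 ≤ t) :
    IsGeodesicFrom ξ (ξ 0) (ξ t) := by
  refine ⟨rfl, by rw [h.dist_zero ht], fun u hu v hv => h u hu.1 v hv.1⟩

lemma IsGeodesicRay.continuousOn {ξ : ℝ → X} (h : IsGeodesicRay ξ) :
    ContinuousOn ξ (Set.Ici 0) := by
  have : LipschitzOnWith 1 ξ (Set.Ici 0) :=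
    LipschitzOnWith.of_dist_le_mul fun s hs t ht => by rw [h s hs t ht, Real.dist_eq]; simp
  exact this.continuousOn

lemma IsGeodesicRay.isPreconnected {ξ : ℝ → X} (h : IsGeodesicRay ξ) (t : ℝ) :
    IsPreconnected (ξ '' Set.Icc 0 t) :=
  isPreconnected_Icc.image _ (h.continuousOn.mono fun _ hu => hu.1)

lemma IsGeodesicFrom.isPreconnected {γ : ℝ → X} {x y : X} (h : IsGeodesicFrom γ x y) :
    IsPreconnected (γ '' Set.Icc 0 (dist x y)) := by
  have : LipschitzOnWith 1 γ (Set.Icc 0 (dist x y)) :=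
    LipschitzOnWith.of_dist_le_mul fun s hs t ht => by rw [h.2.2 s hs t ht, Real.dist_eq]; simp
  exact isPreconnected_Icc.image _ this.continuousOn

lemma CAT0.ray_dist_le (h : CAT0 X) {ξ η : ℝ → X} (hξ : IsGeodesicRay ξ) (hη : IsGeodesicRay η)
    {s t : ℝ} (hs : 0 ≤ s) (hst : s ≤ t) (ht : 0 < t) :
    dist (ξ s) (η s) ≤ (1 - s / t) * dist (ξ 0) (η 0) + s / t * dist (ξ t) (η t) := by
  have := h.dist_le (hξ.segment ht.le) (hη.segment ht.le) (l := s / t) (by positivity)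
    ((div_le_one ht).2 hst)
  rwa [hξ.dist_zero ht.le, hη.dist_zero ht.le, div_mul_cancel₀ _ ht.ne'] at this

lemma CAT0.convexOn_dist (h : CAT0 X) {ξ : ℝ → X} (hξ : IsGeodesicRay ξ) (z : X) {s t : ℝ}
    (hs : 0 ≤ s) (hst : s ≤ t) (ht : 0 < t) :
    dist (ξ s) z ≤ (1 - s / t) * dist (ξ 0) z + s / t * dist (ξ t) z := by
  have := h.dist_le (hξ.segment ht.le) (isGeodesicFrom_const z) (l := s / t) (by positivity)
    ((div_le_one ht).2 hst)
  rwa [hξ.dist_zero ht.le, div_mul_cancel₀ _ ht.ne'] at this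

/-- A bounded convex function on a half-line is nonincreasing, so asymptotic rays never move
further apart than their origins. -/
lemma CAT0.asymptotic_dist_le (h : CAT0 X) {ξ η : ℝ → X} (hξ : IsGeodesicRay ξ)
    (hη : IsGeodesicRay η) (ha : Asymptotic ξ η) {s : ℝ} (hs : 0 ≤ s) :
    dist (ξ s) (η s) ≤ dist (ξ 0) (η 0) := by
  obtain ⟨C, hC⟩ := ha
  have hC0 : 0 ≤ C := dist_nonneg.trans (hC 0 le_rfl)
  have lim : Filter.Tendsto (fun t : ℝ => dist (ξ 0) (η 0) + s / t * C) Filter.atTop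
      (nhds (dist (ξ 0) (η 0) + 0 * C)) :=
    ((Filter.tendsto_id.const_div_atTop s).mul_const C).const_add _
  rw [zero_mul, add_zero] at lim
  refine ge_of_tendsto lim ?_
  filter_upwards [Filter.eventually_ge_atTop s, Filter.eventually_gt_atTop 0] with t h1 h2
  have a := h.ray_dist_le hξ hη hs h1 h2
  have b : s / t * dist (ξ t) (η t) ≤ s / t * C :=
    mul_le_mul_of_nonneg_left (hC t h2.le) (by positivity)
  have c : 0 ≤ s / t * dist (ξ 0) (η 0) := by positivity
  linarith

end Metric

section Divergence

variable {X : Type*} [MetricSpace X]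

/-- If two rays from a common origin have separated by time `t₀`, the distance from `ξ t₀` to a
far point `η T` exceeds the minimal value `T - t₀` by a definite amount independent of `T`. -/
lemma CAT0.dist_far_point (h : CAT0 X) {ξ η : ℝ → X} (hξ : IsGeodesicRay ξ)
    (hη : IsGeodesicRay η) (h0 : ξ 0 = η 0) {t₀ : ℝ} (ht₀ : 0 < t₀) (hne : ξ t₀ ≠ η t₀) :
    ∃ ε > 0, ∀ T ≥ t₀, T - t₀ + ε ≤ dist (ξ t₀) (η T) := by
  have hd : 0 < dist (ξ t₀) (η t₀) := dist_pos.2 hne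
  have hd2 : dist (ξ t₀) (η t₀) ≤ 2 * t₀ := by
    have := dist_triangle_left (ξ t₀) (η t₀) (ξ 0)
    rw [hξ.dist_zero ht₀.le, h0, hη.dist_zero ht₀.le] at this
    linarith
  set d := dist (ξ t₀) (η t₀) with hdd
  refine ⟨d ^ 2 / (4 * t₀), by positivity, fun T hT => ?_⟩
  have hT0 : 0 < T := ht₀.trans_le hT
  have st := h.stewart (hη.segment hT0.le) (ξ t₀) (l := t₀ / T) (by positivity)
    ((div_le_one hT0).2 hT)
  have e0 : dist (η 0) (ξ t₀) = t₀ := by rw [← h0, hξ.dist_zero ht₀.le]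
  rw [hη.dist_zero hT0.le, div_mul_cancel₀ _ hT0.ne', ← hdd, e0] at st
  set m := dist (ξ t₀) (η T) with hm
  have hm0 : 0 ≤ m := dist_nonneg
  have st' : d ^ 2 * T ≤ (T - t₀) * t₀ ^ 2 + t₀ * m ^ 2 - t₀ * (T - t₀) * T := by
    have := mul_le_mul_of_nonneg_right st hT0.le
    refine this.trans (le_of_eq ?_)
    field_simp
  set ε := d ^ 2 / (4 * t₀) with hε
  have hε0 : 0 < ε := by positivity
  have hεt : 4 * t₀ * ε = d ^ 2 := by rw [hε]; field_simp
  have hεle : ε ≤ t₀ := by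
    rw [hε, div_le_iff₀ (by positivity)]; nlinarith
  by_contra! hlt
  have h1 : m ^ 2 < (T - t₀ + ε) ^ 2 := pow_lt_pow_left₀ hlt hm0 two_ne_zero
  have h2 : (T - t₀ + ε) ^ 2 ≤ (T - t₀) ^ 2 + 3 * ε * T := by nlinarith
  have h3 : t₀ * m ^ 2 < t₀ * ((T - t₀) ^ 2 + 3 * ε * T) :=
    mul_lt_mul_of_pos_left (h1.trans_le h2) ht₀
  have h4 : 0 < d ^ 2 * T := by positivity
  have h5 : t₀ * (3 * ε * T) = 3 / 4 * (d ^ 2 * T) := by rw [← hεt]; ring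
  nlinarith

/-- Moving the basepoint along `ξ`, the ray `ξ` and the ray towards the endpoint of `η` keep
diverging at a uniform linear rate. The distances to a far point `η T` play the role of the
Busemann function of `η`: it decreases at unit speed along rays asymptotic to `η`, and at a
speed bounded away from `1` along `ξ` after time `t₀`. -/
lemma CAT0.uniform_divergence (h : CAT0 X) {ξ η : ℝ → X} (hξ : IsGeodesicRay ξ)
    (hη : IsGeodesicRay η) (h0 : ξ 0 = η 0) {t₀ : ℝ} (ht₀ : 0 < t₀) (hne : ξ t₀ ≠ η t₀) :
    ∃ κ > 0, ∀ t ≥ t₀, ∀ ζ : ℝ → X, IsGeodesicRay ζ → ζ 0 = ξ t → Asymptotic ζ η →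
      ∀ s ≥ 0, κ * s ≤ dist (ξ (t + s)) (ζ s) := by
  obtain ⟨ε, hε, hfar⟩ := h.dist_far_point hξ hη h0 ht₀ hne
  refine ⟨ε / t₀, by positivity, fun t ht ζ hζ hζ0 hζa s hs => ?_⟩
  have ht0 : 0 < t := ht₀.trans_le ht
  have lim : Filter.Tendsto (fun T : ℝ => ε / t₀ * s - 2 * s * t / T) Filter.atTop
      (nhds (ε / t₀ * s - 0)) :=
    (Filter.tendsto_id.const_div_atTop (2 * s * t)).const_sub _
  rw [sub_zero] at lim
  refine le_of_tendsto lim ?_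
  filter_upwards [Filter.eventually_ge_atTop t₀, Filter.eventually_ge_atTop s,
    Filter.eventually_gt_atTop 0] with T hT hsT hT0
  have f0 : dist (ξ 0) (η T) = T := by rw [h0, hη.dist_zero hT0.le]
  have c1 := h.convexOn_dist hξ (η T) ht₀.le ht ht0
  have c2 := h.convexOn_dist hξ (η T) ht0.le (le_add_of_nonneg_right hs) (by linarith)
  have c3 := h.convexOn_dist hζ (η T) hs hsT hT0
  have c4 := hfar T hT
  have c5 : dist (ζ T) (η T) ≤ t := by
    have := h.asymptotic_dist_le hζ hη hζa hT0.le
    rwa [hζ0, ← h0, dist_comm (ξ t), hξ.dist_zero ht0.le] at this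
  have c6 : T - t ≤ dist (ξ t) (η T) := by
    have := dist_triangle (ξ 0) (ξ t) (η T)
    rw [f0, hξ.dist_zero ht0.le] at this
    linarith
  have c7 := dist_triangle (ξ (t + s)) (ζ s) (η T)
  rw [f0] at c1 c2
  rw [hζ0] at c3
  set F := dist (ξ t) (η T)
  set F' := dist (ξ (t + s)) (η T)
  have k1 : T - t + ε / t₀ * t ≤ F := by
    have : T - t₀ + ε ≤ (1 - t₀ / t) * T + t₀ / t * F := c4.trans c1
    have := mul_le_mul_of_nonneg_right this (show 0 ≤ t / t₀ by positivity)
    have e : ((1 - t₀ / t) * T + t₀ / t * F) * (t / t₀) = t / t₀ * T - T + F := by field_simp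
    have e' : (T - t₀ + ε) * (t / t₀) = t / t₀ * T - t + ε / t₀ * t := by field_simp
    linarith
  have k2 : F - s + ε / t₀ * s ≤ F' := by
    have := mul_le_mul_of_nonneg_right c2 (show 0 ≤ (t + s) / t by positivity)
    have e : ((1 - t / (t + s)) * T + t / (t + s) * F') * ((t + s) / t) = s / t * T + F' := by
      have : t + s ≠ 0 := by positivity
      field_simp; ring
    have e' : F * ((t + s) / t) = F + s / t * F := by field_simp
    have k := mul_le_mul_of_nonneg_left k1 (show 0 ≤ s / t by positivity)
    have e'' : s / t * (T - t + ε / t₀ * t) = s / t * T - s + ε / t₀ * s := by field_simp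
    linarith
  have k3 : dist (ζ s) (η T) ≤ F - s + 2 * s * t / T := by
    have a := mul_le_mul_of_nonneg_left c5 (show 0 ≤ s / T by positivity)
    have b := mul_le_mul_of_nonneg_left c6 (show 0 ≤ s / T by positivity)
    have e : s / T * (T - t) = s - s * t / T := by field_simp
    have e' : s / T * t = s * t / T := by ring
    have e'' : 2 * s * t / T = s * t / T + s * t / T := by ring
    linarith
  linarith

end Divergence

/-! ### The boundary metric and divergent sequences in the group -/

section Boundary

variable {G X Bd : Type*} [Group G] [MetricSpace X] [MulAction G X] [MulAction G Bd]

lemma bdist_term_nonneg (B : BoundaryStruct G X Bd) (x₀ : X) (α β : Bd) (i : ℕ) :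
    0 ≤ min (dist (B.ray x₀ α (i + 1)) (B.ray x₀ β (i + 1))) ((1 : ℝ) / 2 ^ (i + 1)) :=
  le_min dist_nonneg (by positivity)

lemma summable_bound : Summable fun i : ℕ => (1 : ℝ) / 2 ^ (i + 1) := by
  have := (summable_geometric_two).mul_left (1 / 2 : ℝ)
  refine this.congr fun i => ?_
  rw [pow_succ, one_div_pow]; field_simp

lemma summable_bdist (B : BoundaryStruct G X Bd) (x₀ : X) (α β : Bd) :
    Summable fun i : ℕ =>
      min (dist (B.ray x₀ α (i + 1)) (B.ray x₀ β (i + 1))) ((1 : ℝ) / 2 ^ (i + 1)) :=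
  Summable.of_nonneg_of_le (bdist_term_nonneg B x₀ α β) (fun _ => min_le_right _ _) summable_bound

lemma bdist_nonneg (B : BoundaryStruct G X Bd) (x₀ : X) (α β : Bd) : 0 ≤ bdist B x₀ α β :=
  tsum_nonneg (bdist_term_nonneg B x₀ α β)

lemma bdist_le (B : BoundaryStruct G X Bd) (x₀ : X) (α β : Bd) :
    bdist B x₀ α β ≤ ∑' i : ℕ, (1 : ℝ) / 2 ^ (i + 1) :=
  (summable_bdist B x₀ α β).tsum_le_tsum (fun _ => min_le_right _ _) summable_bound

lemma le_bdist (B : BoundaryStruct G X Bd) (x₀ : X) (α β : Bd) (i : ℕ) :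
    min (dist (B.ray x₀ α (i + 1)) (B.ray x₀ β (i + 1))) ((1 : ℝ) / 2 ^ (i + 1)) ≤
      bdist B x₀ α β :=
  (summable_bdist B x₀ α β).le_tsum i fun j _ => bdist_term_nonneg B x₀ α β j

/-- A sequence of group elements moving `x₀` off to infinity takes each value only finitely often. -/
lemma tendsto_cofinite_of_dist (x₀ y : X) {g : ℕ → G}
    (h : Filter.Tendsto (fun n => dist y (g n • x₀)) Filter.atTop Filter.atTop) :
    Filter.Tendsto g Filter.atTop Filter.cofinite := by
  intro S hS
  obtain ⟨M, hM⟩ := (hS.image fun k => dist y (k • x₀)).bddAbove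
  change ∀ᶠ n in Filter.atTop, g n ∈ S
  filter_upwards [h.eventually_gt_atTop M] with n hn
  by_contra hnS
  exact absurd (hM ⟨g n, hnS, rfl⟩) (not_le.2 hn)

lemma scrambled_pair {B : BoundaryStruct G X Bd} {x₀ : X} {α β : Bd} {c : ℝ} (hc : 0 < c)
    {g g' : ℕ → G} (hg : Filter.Tendsto g Filter.atTop Filter.cofinite)
    (hg' : Filter.Tendsto g' Filter.atTop Filter.cofinite)
    (hlow : ∀ᶠ n in Filter.atTop, c ≤ bdist B x₀ (g n • α) (g n • β))
    (hlim : Filter.Tendsto (fun n => bdist B x₀ (g' n • α) (g' n • β)) Filter.atTop (nhds 0)) :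
    0 < Filter.limsup (fun g : G => bdist B x₀ (g • α) (g • β)) Filter.cofinite ∧
    Filter.liminf (fun g : G => bdist B x₀ (g • α) (g • β)) Filter.cofinite = 0 := by
  have : (Filter.cofinite : Filter G).NeBot := hg.neBot
  have bdd : Filter.IsBoundedUnder (· ≤ ·) Filter.cofinite
      (fun g : G => bdist B x₀ (g • α) (g • β)) :=
    Filter.isBoundedUnder_of ⟨_, fun g => bdist_le B x₀ _ _⟩
  have bdd' : Filter.IsBoundedUnder (· ≥ ·) Filter.cofinite
      (fun g : G => bdist B x₀ (g • α) (g • β)) :=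
    Filter.isBoundedUnder_of ⟨0, fun g => bdist_nonneg B x₀ _ _⟩
  refine ⟨hc.trans_le ?_, le_antisymm ?_ ?_⟩
  · exact Filter.le_limsup_of_frequently_le (hg.frequently hlow.frequently) bdd
  · refine le_of_forall_pos_le_add fun ε hε => ?_
    rw [zero_add]
    exact Filter.liminf_le_of_frequently_le
      (hg'.frequently ((hlim.eventually_le_const hε).frequently)) bdd'
  · exact Filter.le_liminf_of_le bdd.isCoboundedUnder_ge
      (Filter.Eventually.of_forall fun g => bdist_nonneg B x₀ _ _)

/-- Rays that stay within a fixed distance `K` up to times tending to infinity converge in the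
boundary. -/
lemma CAT0.tendsto_bdist_zero (h : CAT0 X) (B : BoundaryStruct G X Bd) (x₀ : X) {K : ℝ}
    {a b : ℕ → Bd} {u : ℕ → ℝ} (hu : Filter.Tendsto u Filter.atTop Filter.atTop)
    (hK : ∀ᶠ n in Filter.atTop, dist (B.ray x₀ (a n) (u n)) (B.ray x₀ (b n) (u n)) ≤ K) :
    Filter.Tendsto (fun n => bdist B x₀ (a n) (b n)) Filter.atTop (nhds 0) := by
  have key : ∀ i : ℕ, Filter.Tendsto (fun n => min
      (dist (B.ray x₀ (a n) (i + 1)) (B.ray x₀ (b n) (i + 1))) ((1 : ℝ) / 2 ^ (i + 1)))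
      Filter.atTop (nhds 0) := by
    intro i
    have lim : Filter.Tendsto (fun n => ((i : ℝ) + 1) / u n * K) Filter.atTop (nhds (0 * K)) :=
      (hu.const_div_atTop ((i : ℝ) + 1)).mul_const K
    rw [zero_mul] at lim
    refine squeeze_zero' (Filter.Eventually.of_forall fun n => bdist_term_nonneg B x₀ _ _ i) ?_ lim
    filter_upwards [hK, hu.eventually_ge_atTop ((i : ℝ) + 1)] with n h1 h2
    have i0 : (0 : ℝ) < i + 1 := by positivity
    refine (min_le_left _ _).trans ?_
    have := h.ray_dist_le (B.isRay x₀ (a n)) (B.isRay x₀ (b n)) i0.le h2 (i0.trans_le h2)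
    rw [B.ray_start, B.ray_start, dist_self, mul_zero, zero_add] at this
    exact this.trans (mul_le_mul_of_nonneg_left h1 (div_nonneg i0.le (i0.le.trans h2)))
  have := tendsto_tsum_of_dominated_convergence summable_bound key
    (Filter.Eventually.of_forall fun n i => by
      rw [Real.norm_eq_abs, abs_of_nonneg (bdist_term_nonneg B x₀ _ _ i)]
      exact min_le_right _ _)
  simpa [bdist] using this

lemma CAT0.ray_basepoint (h : CAT0 X) (B : BoundaryStruct G X Bd) (x y : X) (α : Bd) {s : ℝ}
    (hs : 0 ≤ s) : dist (B.ray x α s) (B.ray y α s) ≤ dist x y := by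
  simpa only [B.ray_start] using
    h.asymptotic_dist_le (B.isRay x α) (B.isRay y α) (B.ray_asymp x y α) hs

lemma CAT0.ray_tail (h : CAT0 X) (B : BoundaryStruct G X Bd) (x : X) (α : Bd) {t s : ℝ}
    (ht : 0 ≤ t) (hs : 0 ≤ s) : B.ray (B.ray x α t) α s = B.ray x α (t + s) := by
  have ha : Asymptotic (fun u => B.ray x α (t + u)) (B.ray (B.ray x α t) α) := by
    obtain ⟨C, hC⟩ := B.ray_asymp x (B.ray x α t) α
    refine ⟨t + C, fun u hu => (dist_triangle _ (B.ray x α u) _).trans (add_le_add ?_ (hC u hu))⟩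
    rw [B.isRay x α _ (add_nonneg ht hu) _ hu, add_sub_cancel_right, abs_of_nonneg ht]
  have := h.asymptotic_dist_le ((B.isRay x α).shift ht) (B.isRay _ α) ha hs
  rw [B.ray_start, add_zero, dist_self] at this
  exact (dist_le_zero.1 this).symm

lemma dist_inv_smul (hiso : IsometricAction G X) (g : G) (x y : X) :
    dist (g⁻¹ • x) y = dist x (g • y) := by
  rw [← hiso g, smul_inv_smul]

/-- Translating points `ξ n` of the ray towards `α` back near `x₀` keeps `α` and `β` apart. -/
lemma CAT0.exists_separating (h : CAT0 X) (hgeo : GeometricAction G X)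
    (B : BoundaryStruct G X Bd) (x₀ : X) {α β : Bd} (hne : α ≠ β) :
    ∃ c > 0, ∃ g : ℕ → G, Filter.Tendsto g Filter.atTop Filter.cofinite ∧
      ∀ᶠ n in Filter.atTop, c ≤ bdist B x₀ (g n • α) (g n • β) := by
  obtain ⟨hiso, -, hco⟩ := hgeo
  obtain ⟨R, hR, hcov⟩ := hco x₀
  obtain ⟨t₀, ht₀, hsep⟩ : ∃ t₀ > 0, B.ray x₀ α t₀ ≠ B.ray x₀ β t₀ := by
    by_contra! hall
    refine hne (B.ray_inj x₀ α β ⟨0, fun t ht => ?_⟩)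
    rcases ht.eq_or_lt with rfl | ht
    · rw [B.ray_start, B.ray_start, dist_self]
    · rw [hall t ht, dist_self]
  obtain ⟨κ, hκ, hdiv⟩ := h.uniform_divergence (B.isRay x₀ α) (B.isRay x₀ β)
    (by rw [B.ray_start, B.ray_start]) ht₀ hsep
  obtain ⟨i, hi⟩ := exists_nat_ge ((2 * R + 1) / κ)
  have hi' : 2 * R + 1 ≤ κ * (i + 1) := by
    rw [div_le_iff₀ hκ] at hi; nlinarith
  choose g hg using fun n : ℕ => hcov (B.ray x₀ α n)
  refine ⟨min 1 (1 / 2 ^ (i + 1)), by positivity, fun n => (g n)⁻¹, ?_, ?_⟩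
  · refine tendsto_cofinite_of_dist x₀ x₀ ?_
    refine Filter.tendsto_atTop_mono (f := fun n : ℕ => -R + (n : ℝ)) (fun n => ?_)
      (Filter.tendsto_atTop_add_const_left _ _ tendsto_natCast_atTop_atTop)
    have e := (B.isRay x₀ α).dist_zero (Nat.cast_nonneg n)
    rw [B.ray_start] at e
    have := dist_triangle_right x₀ (B.ray x₀ α n) (g n • x₀)
    rw [dist_comm x₀, dist_inv_smul hiso, dist_comm]
    rw [dist_comm x₀ (g n • x₀)] at this
    linarith [hg n, dist_comm (g n • x₀) x₀]
  · filter_upwards [Filter.eventually_ge_atTop ⌈t₀⌉₊] with n hn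
    have hn' : t₀ ≤ n := (Nat.le_ceil t₀).trans (by exact_mod_cast hn)
    have i0 : (0 : ℝ) ≤ i + 1 := by positivity
    refine le_trans (min_le_min ?_ le_rfl) (le_bdist B x₀ _ _ i)
    obtain ⟨p, hp⟩ : ∃ p, p = B.ray x₀ α n := ⟨_, rfl⟩
    have d1 := hdiv n hn' (B.ray p β) (B.isRay p β) (by rw [B.ray_start, hp]) (B.ray_asymp _ _ _)
      (i + 1) i0
    rw [← h.ray_tail B x₀ α (Nat.cast_nonneg n) i0, ← hp, ← hiso (g n)⁻¹,
      B.equivariant _ p α, B.equivariant _ p β] at d1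
    have hx : dist x₀ ((g n)⁻¹ • p) ≤ R := by
      rw [dist_comm, dist_inv_smul hiso, hp]; exact hg n
    have d2 := h.ray_basepoint B x₀ ((g n)⁻¹ • p) ((g n)⁻¹ • α) i0
    have d3 := h.ray_basepoint B x₀ ((g n)⁻¹ • p) ((g n)⁻¹ • β) i0
    rw [dist_comm] at d2
    have d4 := dist_triangle4 (B.ray ((g n)⁻¹ • p) ((g n)⁻¹ • α) (i + 1))
      (B.ray x₀ ((g n)⁻¹ • α) (i + 1)) (B.ray x₀ ((g n)⁻¹ • β) (i + 1))
      (B.ray ((g n)⁻¹ • p) ((g n)⁻¹ • β) (i + 1))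
    linarith

end Boundary

/-! ### Reflections with finite centralizer -/

section Reflection

variable {G X Bd : Type*} [Group G] [MetricSpace X] [MulAction G X] [MulAction G Bd]

/-- A reflection interchanges the two components of the complement of its wall, so a connected set
containing a point and its mirror image meets the wall. -/
lemma ActsAsReflection.exists_fixed {r : G} (h : ActsAsReflection G (X := X) r) {S : Set X}
    (hS : IsPreconnected S) {x : X} (hx : x ∈ S) (hrx : r • x ∈ S) : ∃ f ∈ S, r • f = f := by
  obtain ⟨hinv, a, b, -, -, hab, hunion, -, -, himg⟩ := h
  by_contra! hno
  have hsub : S ⊆ {x : X | r • x = x}ᶜ := fun y hy => hno y hy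
  have hcc := hS.subset_connectedComponentIn hx hsub hrx
  have hxU := hsub hx
  rw [← hunion] at hxU
  rcases hxU with hxa | hxb
  · have h1 : r • x ∈ connectedComponentIn ({x : X | r • x = x}ᶜ) b := himg ▸ ⟨x, hxa, rfl⟩
    exact hab ((connectedComponentIn_eq hxa).trans
      ((connectedComponentIn_eq hcc).trans (connectedComponentIn_eq h1).symm))
  · obtain ⟨y, hy, rfl⟩ : x ∈ _ '' _ := himg ▸ hxb
    simp only [hinv] at hcc hxb
    exact hab ((connectedComponentIn_eq hy).trans
      ((connectedComponentIn_eq hcc).symm.trans (connectedComponentIn_eq hxb).symm))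

/-- The centralizer of `r` acts coboundedly on the fixed-point set of `r`, because only finitely
many conjugates of `r` move `x₀` by a bounded amount. If it is finite, the fixed-point set is
therefore bounded. -/
lemma bounded_fixed (hgeo : GeometricAction G X) (x₀ : X) {r : G}
    (hfin : {h : G | r * h = h * r}.Finite) : ∃ M, ∀ f : X, r • f = f → dist x₀ f ≤ M := by
  obtain ⟨hiso, hprop, hco⟩ := hgeo
  obtain ⟨R, hR, hcov⟩ := hco x₀
  have hH : ((fun g : G => g⁻¹ * r * g) ⁻¹' {g : G | dist x₀ (g • x₀) ≤ 2 * R}).Finite := by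
    refine (hprop x₀ (2 * R)).preimage' fun k _ => ?_
    rcases Set.eq_empty_or_nonempty ((fun g : G => g⁻¹ * r * g) ⁻¹' {k}) with he | ⟨g₀, hg₀⟩
    · rw [he]; exact Set.finite_empty
    · refine (hfin.image fun z => z * g₀).subset fun g hg => ⟨g * g₀⁻¹, ?_, by simp⟩
      have e : g⁻¹ * r * g = g₀⁻¹ * r * g₀ := Eq.trans hg (Eq.symm hg₀)
      change r * (g * g₀⁻¹) = g * g₀⁻¹ * r
      calc r * (g * g₀⁻¹) = g * (g⁻¹ * r * g) * g₀⁻¹ := by group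
        _ = g * g₀⁻¹ * r := by rw [e]; group
  obtain ⟨M, hM⟩ := (hH.image fun g => dist x₀ (g • x₀)).bddAbove
  refine ⟨M + R, fun f hf => ?_⟩
  obtain ⟨g, hg⟩ := hcov f
  have hmem : g ∈ (fun g : G => g⁻¹ * r * g) ⁻¹' {g : G | dist x₀ (g • x₀) ≤ 2 * R} := by
    change dist x₀ ((g⁻¹ * r * g) • x₀) ≤ 2 * R
    rw [mul_smul, mul_smul, dist_comm, dist_inv_smul hiso]
    have h1 : dist (r • g • x₀) f ≤ R := by
      rw [← hf, hiso, dist_comm]; exact hg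
    linarith [dist_triangle (r • g • x₀) f (g • x₀)]
  have h2 : dist x₀ (g • x₀) ≤ M := hM ⟨g, hmem, rfl⟩
  linarith [dist_triangle_right x₀ f (g • x₀)]

/-- If the rays from `p` towards `a` and `δ` avoid the wall of `r`, then the ray towards `δ` from
a point reflected to the other side must cross it: far out, the rays towards `δ` from both
origins are joined by short geodesics that stay clear of the bounded wall. -/
lemma CAT0.crossing (h : CAT0 X) {r : G} (hrefl : ActsAsReflection G (X := X) r)
    (B : BoundaryStruct G X Bd) {p : X} {M : ℝ} (hM : ∀ f : X, r • f = f → dist p f ≤ M)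
    {a δ : Bd} (ha : ∀ u ≥ 0, r • B.ray p a u ≠ B.ray p a u)
    (hδ : ∀ u ≥ 0, r • B.ray p δ u ≠ B.ray p δ u) {n : ℝ} (hn : 0 ≤ n) :
    ∃ u ≥ 0, r • B.ray (r • B.ray p a n) δ u = B.ray (r • B.ray p a n) δ u := by
  set y := r • B.ray p a n with hy
  obtain ⟨s, hs0, hs⟩ : ∃ s : ℝ, 0 ≤ s ∧ M + dist p y < s :=
    ⟨max 0 (M + dist p y + 1), le_max_left _ _, lt_of_lt_of_le (by linarith) (le_max_right _ _)⟩
  obtain ⟨σ, hσ⟩ := h.1 (B.ray p δ s) (B.ray y δ s)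
  have hlen := h.ray_basepoint B p y δ hs0
  have c1 : IsPreconnected (B.ray p a '' Set.Icc 0 n ∪ B.ray p δ '' Set.Icc 0 s) :=
    ((B.isRay p a).isPreconnected n).union p ⟨0, ⟨le_rfl, hn⟩, B.ray_start _ _⟩
      ⟨0, ⟨le_rfl, hs0⟩, B.ray_start _ _⟩ ((B.isRay p δ).isPreconnected s)
  have c2 := c1.union (B.ray p δ s) (Or.inr ⟨s, ⟨hs0, le_rfl⟩, rfl⟩)
    (show _ ∈ σ '' Set.Icc 0 _ from ⟨0, ⟨le_rfl, dist_nonneg⟩, hσ.1⟩) hσ.isPreconnected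
  have c3 := c2.union (B.ray y δ s) (Or.inr ⟨_, ⟨dist_nonneg, le_rfl⟩, hσ.2.1⟩)
    (show _ ∈ B.ray y δ '' Set.Icc 0 s from ⟨s, ⟨hs0, le_rfl⟩, rfl⟩) ((B.isRay y δ).isPreconnected s)
  obtain ⟨f, hf, hrf⟩ := hrefl.exists_fixed c3 (x := B.ray p a n)
    (Or.inl (Or.inl (Or.inl ⟨n, ⟨hn, le_rfl⟩, rfl⟩)))
    (Or.inr ⟨0, ⟨le_rfl, hs0⟩, B.ray_start _ _⟩)
  rcases hf with ((⟨u, hu, rfl⟩ | ⟨u, hu, rfl⟩) | ⟨u, hu, rfl⟩) | ⟨u, hu, rfl⟩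
  · exact absurd hrf (ha u hu.1)
  · exact absurd hrf (hδ u hu.1)
  · exfalso
    have e1 := hσ.2.2 0 ⟨le_rfl, dist_nonneg⟩ u hu
    rw [hσ.1, zero_sub, abs_neg, abs_of_nonneg hu.1] at e1
    have e2 := (B.isRay p δ).dist_zero hs0
    rw [B.ray_start] at e2
    linarith [dist_triangle_right p (B.ray p δ s) (σ u), hM _ hrf, hu.2]
  · exact ⟨u, hu.1, hrf⟩

/-- If some translates of the rays towards `α` and `β` both avoid the wall of `r`, then viewed from
basepoints far away on the opposite side of the wall, both rays must pass through it, so `α` and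
`β` look arbitrarily close. -/
lemma CAT0.exists_contracting (h : CAT0 X) (hgeo : GeometricAction G X)
    (B : BoundaryStruct G X Bd) (x₀ : X) {r : G} (hrefl : ActsAsReflection G (X := X) r)
    {M : ℝ} (hM : ∀ f : X, r • f = f → dist x₀ f ≤ M) {α β : Bd} (k : G)
    (hα : ∀ u ≥ 0, r • k • B.ray x₀ α u ≠ k • B.ray x₀ α u)
    (hβ : ∀ u ≥ 0, r • k • B.ray x₀ β u ≠ k • B.ray x₀ β u) :
    ∃ g : ℕ → G, Filter.Tendsto g Filter.atTop Filter.cofinite ∧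
      Filter.Tendsto (fun n => bdist B x₀ (g n • α) (g n • β)) Filter.atTop (nhds 0) := by
  obtain ⟨hiso, -, hco⟩ := hgeo
  obtain ⟨R, hR, hcov⟩ := hco x₀
  simp only [B.equivariant k] at hα hβ
  set p := k • x₀ with hp
  set L := dist p x₀ + M with hL
  have hMp : ∀ f : X, r • f = f → dist p f ≤ L := fun f hf =>
    (dist_triangle p x₀ f).trans (by linarith [hM f hf])
  set y : ℕ → X := fun n => r • B.ray p (k • α) n with hy
  choose u hu0 hu using fun n : ℕ => h.crossing hrefl B hMp hα hα (Nat.cast_nonneg n)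
  choose v hv0 hv using fun n : ℕ => h.crossing hrefl B hMp hα hβ (Nat.cast_nonneg n)
  choose g hg using fun n : ℕ => hcov (y n)
  have far : ∀ (n : ℕ) (f : X), r • f = f → n - L ≤ dist (y n) f := by
    intro n f hf
    have e := (B.isRay p (k • α)).dist_zero (Nat.cast_nonneg n)
    rw [B.ray_start] at e
    have e2 : dist (y n) f = dist (B.ray p (k • α) n) f := by
      conv_lhs => rw [← hf]
      exact hiso r _ _
    rw [e2]
    linarith [dist_triangle_right p (B.ray p (k • α) n) f, hMp f hf]
  have hyu : ∀ n, dist (y n) (B.ray (y n) (k • α) (u n)) = u n := by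
    intro n
    have := (B.isRay (y n) (k • α)).dist_zero (hu0 n)
    rwa [B.ray_start] at this
  have hyv : ∀ n, dist (y n) (B.ray (y n) (k • β) (v n)) = v n := by
    intro n
    have := (B.isRay (y n) (k • β)).dist_zero (hv0 n)
    rwa [B.ray_start] at this
  have hlim : ∀ C : ℝ, Filter.Tendsto (fun n : ℕ => (n : ℝ) - C) Filter.atTop Filter.atTop :=
    fun C => by
      simpa only [sub_eq_add_neg] using
        Filter.tendsto_atTop_add_const_right _ (-C) tendsto_natCast_atTop_atTop
  refine ⟨fun n => (g n)⁻¹ * k, ?_, ?_⟩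
  · refine tendsto_cofinite_of_dist x₀ x₀ ?_
    refine Filter.tendsto_atTop_mono (fun n => ?_) (hlim (L + L + R))
    rw [mul_smul, ← hp, dist_comm, dist_inv_smul hiso]
    have h1 := far n _ (hu n)
    have h2 := hMp _ (hu n)
    have h3 := dist_triangle4 (y n) (g n • x₀) p (B.ray (y n) (k • α) (u n))
    rw [dist_comm p]
    linarith [hg n]
  · have hut : Filter.Tendsto u Filter.atTop Filter.atTop :=
      Filter.tendsto_atTop_mono (fun n => (hyu n) ▸ far n _ (hu n)) (hlim L)
    refine h.tendsto_bdist_zero B x₀ hut (K := 2 * R + 4 * M)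
      (Filter.Eventually.of_forall fun n => ?_)
    have hfix : dist (B.ray (y n) (k • α) (u n)) (B.ray (y n) (k • β) (v n)) ≤ 2 * M := by
      linarith [dist_triangle_left (B.ray (y n) (k • α) (u n)) (B.ray (y n) (k • β) (v n)) x₀,
        hM _ (hu n), hM _ (hv n)]
    -- both crossing times are distances from `y n` to points of the bounded wall
    have huv : |v n - u n| ≤ 2 * M := by
      rw [abs_sub_comm]
      refine le_trans ?_ hfix
      nth_rw 1 [← hyu n, ← hyv n, dist_comm (y n), dist_comm (y n)]
      exact abs_dist_sub_le _ _ _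
    have hmid : dist (B.ray (y n) (k • α) (u n)) (B.ray (y n) (k • β) (u n)) ≤ 4 * M := by
      have := dist_triangle (B.ray (y n) (k • α) (u n)) (B.ray (y n) (k • β) (v n))
        (B.ray (y n) (k • β) (u n))
      rw [B.isRay (y n) (k • β) _ (hv0 n) _ (hu0 n)] at this
      linarith
    rw [← hiso (g n)⁻¹, B.equivariant _ (y n), B.equivariant _ (y n), smul_smul _ k α,
      smul_smul _ k β] at hmid
    have hx : dist x₀ ((g n)⁻¹ • y n) ≤ R := by
      rw [dist_comm, dist_inv_smul hiso]; exact hg n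
    have d2 := h.ray_basepoint B x₀ ((g n)⁻¹ • y n) (((g n)⁻¹ * k) • α) (hu0 n)
    have d3 := h.ray_basepoint B x₀ ((g n)⁻¹ • y n) (((g n)⁻¹ * k) • β) (hu0 n)
    rw [dist_comm] at d3
    have d4 := dist_triangle4 (B.ray x₀ (((g n)⁻¹ * k) • α) (u n))
      (B.ray ((g n)⁻¹ • y n) (((g n)⁻¹ * k) • α) (u n))
      (B.ray ((g n)⁻¹ • y n) (((g n)⁻¹ * k) • β) (u n))
      (B.ray x₀ (((g n)⁻¹ * k) • β) (u n))
    linarith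

lemma CAT0.eq_of_frequently_close (h : CAT0 X) (B : BoundaryStruct G X Bd) (x₀ : X) {c δ : Bd}
    {K : ℝ} (hK : ∃ᶠ s : ℕ in Filter.atTop, dist (B.ray x₀ c s) (B.ray x₀ δ s) ≤ K) : c = δ := by
  refine B.ray_inj x₀ c δ ⟨K, fun t ht => ?_⟩
  obtain ⟨s, hs, hts⟩ := (hK.and_eventually (Filter.eventually_ge_atTop (⌈t⌉₊ + 1))).exists
  have hts' : t + 1 ≤ s := by
    have : ((⌈t⌉₊ + 1 : ℕ) : ℝ) ≤ s := by exact_mod_cast hts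
    push_cast at this
    linarith [Nat.le_ceil t]
  have hs0 : (0 : ℝ) < s := by linarith
  have := h.ray_dist_le (B.isRay x₀ c) (B.isRay x₀ δ) ht (by linarith : t ≤ s) hs0
  rw [B.ray_start, B.ray_start, dist_self, mul_zero, zero_add] at this
  refine this.trans ((mul_le_of_le_one_left dist_nonneg ((div_le_one hs0).2 (by linarith))).trans hs)

/-- If the rays from `x₀` towards `α` and `β` together meet every translate of a bounded set, then
by cocompactness every ray stays close to their union, so there is no third boundary point. -/
lemma CAT0.no_third_point (h : CAT0 X) (hgeo : GeometricAction G X) (B : BoundaryStruct G X Bd)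
    (x₀ : X) {M : ℝ} {α β : Bd}
    (hmeet : ∀ k : G, ∃ u ≥ 0, dist x₀ (k • B.ray x₀ α u) ≤ M ∨ dist x₀ (k • B.ray x₀ β u) ≤ M)
    (c : Bd) : c = α ∨ c = β := by
  obtain ⟨hiso, -, hco⟩ := hgeo
  obtain ⟨R, hR, hcov⟩ := hco x₀
  have key : ∀ (s : ℕ) (δ : Bd) (g : G) (u : ℝ), 0 ≤ u → dist (B.ray x₀ c s) (g • x₀) ≤ R →
      dist x₀ (g⁻¹ • B.ray x₀ δ u) ≤ M →
      dist (B.ray x₀ c s) (B.ray x₀ δ s) ≤ 2 * (R + M) := by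
    intro s δ g u hu h1 h2
    rw [dist_comm, dist_inv_smul hiso, dist_comm] at h2
    have s0 : (0 : ℝ) ≤ s := Nat.cast_nonneg s
    have h3 : dist (B.ray x₀ c s) (B.ray x₀ δ u) ≤ R + M :=
      (dist_triangle _ _ _).trans (add_le_add h1 h2)
    have h4 : |u - s| ≤ R + M := by
      rw [abs_sub_comm]
      have e1 := (B.isRay x₀ c).dist_zero s0
      have e2 := (B.isRay x₀ δ).dist_zero hu
      rw [B.ray_start, dist_comm] at e1 e2
      refine le_trans ?_ h3
      conv_lhs => rw [← e1, ← e2]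
      exact abs_dist_sub_le _ _ _
    have h5 := dist_triangle (B.ray x₀ c s) (B.ray x₀ δ u) (B.ray x₀ δ s)
    rw [B.isRay x₀ δ _ hu _ s0] at h5
    linarith
  have hall : ∀ s : ℕ, dist (B.ray x₀ c s) (B.ray x₀ α s) ≤ 2 * (R + M) ∨
      dist (B.ray x₀ c s) (B.ray x₀ β s) ≤ 2 * (R + M) := by
    intro s
    obtain ⟨g, hg⟩ := hcov (B.ray x₀ c s)
    obtain ⟨u, hu, h1 | h1⟩ := hmeet g⁻¹
    · exact Or.inl (key s α g u hu hg h1)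
    · exact Or.inr (key s β g u hu hg h1)
  have hfreq := Filter.frequently_or_distrib.1
    (Filter.Frequently.of_forall (f := Filter.atTop) hall)
  exact hfreq.imp (h.eq_of_frequently_close B x₀) (h.eq_of_frequently_close B x₀)

end Reflection

/-- Corollary 5.4. Suppose a group `G` acts geometrically on a CAT(0)
space `X` with basepoint `x₀` and `|∂X| > 2`.  If some `r ∈ G` acts as a reflection of
`X` and has finite centralizer in `G`, then `∂X` is a scrambled set. -/
theorem scrambled_of_reflection {G X Bd : Type*} [Group G] [MetricSpace X]
    [MulAction G X] [MulAction G Bd]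
    (hCAT : CAT0 X) (hgeo : GeometricAction G X)
    (B : BoundaryStruct G X Bd) (x₀ : X) (hcard : MoreThanTwo Bd)
    (hr : ∃ r : G, ActsAsReflection G (X := X) r ∧ {h : G | r * h = h * r}.Finite) :
    IsScrambled B x₀ := by
  obtain ⟨r, hrefl, hfin⟩ := hr
  intro α β hne
  obtain ⟨M, hM⟩ := bounded_fixed hgeo x₀ hfin
  obtain ⟨c, hc, g, hg, hlow⟩ := hCAT.exists_separating hgeo B x₀ hne
  -- some translate of the wall is met by neither of the two rays, as there is a third point
  obtain ⟨k, hα, hβ⟩ : ∃ k : G, (∀ u ≥ 0, r • k • B.ray x₀ α u ≠ k • B.ray x₀ α u) ∧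
      (∀ u ≥ 0, r • k • B.ray x₀ β u ≠ k • B.ray x₀ β u) := by
    by_contra! hno
    have hthird : ∀ c : Bd, c = α ∨ c = β := by
      refine hCAT.no_third_point hgeo B x₀ (M := M) fun k => ?_
      by_cases hk : ∀ u ≥ 0, r • k • B.ray x₀ α u ≠ k • B.ray x₀ α u
      · obtain ⟨u, hu, hf⟩ := hno k hk
        exact ⟨u, hu, Or.inr (hM _ hf)⟩
      · push Not at hk
        obtain ⟨u, hu, hf⟩ := hk
        exact ⟨u, hu, Or.inl (hM _ hf)⟩
    obtain ⟨a, b, c, hab, hac, hbc⟩ := hcard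
    have := hthird a
    have := hthird b
    have := hthird c
    grind
  obtain ⟨g', hg', hlim⟩ := hCAT.exists_contracting hgeo B x₀ hrefl hM k hα hβ
  exact scrambled_pair hc hg hg' hlow hlim
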